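/- arXiv:2310.05328 — 2 statements merged into one kernel-verified Lean document; each statement's English description precedes it below -/
import Mathlib

section
/- (Truncation symmetry) For every n ≥ 1, all real numbers y_1, …, y_n, and every integer 1 ≤ ℓ ≤ n, there exist real numbers x_1, …, x_ℓ such that s_k(x_1, …, x_ℓ) = s_k(y_1, …, y_n) for all 0 ≤ k ≤ ℓ, where on the left the elementary symmetric mean is taken in ℓ variables and on the right in n variables. -/
open Finset Real

/-- The non-normalized elementary symmetric function `S_m(y)`. -/
noncomputable def esymmS (n m : ℕ) (y : Fin n → ℝ) : ℝ :=
  ∑ A ∈ powersetCard m (univ : Finset (Fin n)), ∏ i ∈ A, y i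

/-- The elementary symmetric mean `s_m(y) = S_m(y) / binom(n,m)`. -/
noncomputable def smean (n m : ℕ) (y : Fin n → ℝ) : ℝ :=
  esymmS n m y / (n.choose m)

/-!
By Vieta's formulas the elementary symmetric means of the roots of a polynomial are its
coefficients, divided by binomial coefficients and, up to sign, by the leading coefficient. In this
normalization differentiating a polynomial of degree `m + 1` leaves the means unchanged, because
`(m + 1 - k) * (m + 1).choose k = (m + 1) * m.choose k`. By Rolle's theorem the derivative of a
polynomial with only real roots has only real roots, so the roots of the `(n - ℓ)`-th derivative of
`∏ i, (X - y i)` are the required reals.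
-/

/-- The elementary symmetric mean of a multiset, the form in which `smean` is compared with the
coefficients of a polynomial having that multiset of roots. It has the junk value `0` when the
binomial coefficient vanishes in `K`, in particular when `k` exceeds the cardinality. -/
noncomputable def esymmMean {K : Type*} [Semifield K] (s : Multiset K) (k : ℕ) : K :=
  s.esymm k / (s.card.choose k)

lemma smean_eq_esymmMean (n k : ℕ) (y : Fin n → ℝ) :
    smean n k y = esymmMean (univ.val.map y) k := by
  rw [smean, esymmS, esymmMean, Finset.esymm_map_val, Multiset.card_map, card_val, card_univ,
    Fintype.card_fin]

lemma exists_univ_val_map_eq {α : Type*} (s : Multiset α) :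
    ∃ x : Fin s.card → α, univ.val.map x = s := by
  induction s using Quotient.inductionOn with
  | h l => exact ⟨l.get, (Fin.univ_val_map l.get).trans (congrArg _ (List.ofFn_get l))⟩

section Vieta

open Polynomial

variable {K : Type*} [Field K] [CharZero K] {p : K[X]} {k : ℕ}

lemma coeff_natDegree_sub_eq_esymmMean_roots (hp : p.Splits) (hk : k ≤ p.natDegree) :
    p.coeff (p.natDegree - k) =
      (-1) ^ k * p.leadingCoeff * p.natDegree.choose k * esymmMean p.roots k := by
  have hchoose : (p.natDegree.choose k : K) ≠ 0 := by exact_mod_cast (Nat.choose_pos hk).ne'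
  rw [coeff_eq_esymm_roots_of_splits hp (Nat.sub_le _ _), Nat.sub_sub_self hk, esymmMean,
    ← hp.natDegree_eq_card_roots]
  field_simp

lemma esymmMean_roots_derivative (hp : p.Splits) (hp' : p.derivative.Splits)
    (hk : k < p.natDegree) : esymmMean p.derivative.roots k = esymmMean p.roots k := by
  obtain ⟨m, hm⟩ : ∃ m, p.natDegree = m + 1 := Nat.exists_eq_add_one.mpr (by omega)
  have hkm : k ≤ m := by omega
  have hm' : p.derivative.natDegree = m := by rw [natDegree_derivative, hm, Nat.add_sub_cancel]
  have hlead : p.derivative.leadingCoeff = p.leadingCoeff * (m + 1) := by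
    rw [leadingCoeff_derivative, hm, Nat.cast_add_one]
  have hchoose : (m.choose k : K) * (m + 1) = (m + 1).choose k * ((m - k : ℕ) + 1) := by
    have h := Nat.choose_mul_succ_eq m k
    rw [Nat.succ_sub hkm] at h
    exact_mod_cast h
  have hcoeff : p.derivative.coeff (m - k) = p.coeff (m + 1 - k) * ((m - k : ℕ) + 1) := by
    rw [coeff_derivative, Nat.succ_sub hkm]
  have vieta := coeff_natDegree_sub_eq_esymmMean_roots hp hk.le
  have vieta' := coeff_natDegree_sub_eq_esymmMean_roots hp' (hkm.trans_eq hm'.symm)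
  rw [hm] at vieta
  rw [hm', hlead, hcoeff, vieta] at vieta'
  have hfactor : (-1) ^ k * p.leadingCoeff * (m.choose k * (m + 1)) ≠ 0 := by
    have hp0 : p ≠ 0 := by rintro rfl; simp at hm
    have := (Nat.choose_pos hkm).ne'
    simp [hp0, this, Nat.cast_add_one_ne_zero]
  apply mul_left_cancel₀ hfactor
  linear_combination -vieta' - (-1) ^ k * p.leadingCoeff * esymmMean p.roots k * hchoose

end Vieta

section Rolle

open Polynomial

lemma natDegree_iterate_derivative_eq_sub {R : Type*} [Semiring R] [IsAddTorsionFree R]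
    (p : R[X]) (m : ℕ) : (derivative^[m] p).natDegree = p.natDegree - m := by
  induction m with
  | zero => rfl
  | succ m ih =>
    rw [Function.iterate_succ_apply', natDegree_derivative, ih, Nat.sub_sub]

variable {p : ℝ[X]}

lemma splits_derivative (hp : p.Splits) : p.derivative.Splits := by
  rw [splits_iff_card_roots]
  have hRolle := card_roots_le_derivative p
  have hle := card_roots' p.derivative
  have hdeg := natDegree_derivative p
  have hcard := splits_iff_card_roots.mp hp
  omega

lemma splits_iterate_derivative (hp : p.Splits) (m : ℕ) : (derivative^[m] p).Splits := by
  induction m with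
  | zero => exact hp
  | succ m ih => exact Function.iterate_succ_apply' derivative m p ▸ splits_derivative ih

lemma esymmMean_roots_iterate_derivative (hp : p.Splits) {k m : ℕ} (h : k + m ≤ p.natDegree) :
    esymmMean (derivative^[m] p).roots k = esymmMean p.roots k := by
  induction m with
  | zero => rfl
  | succ m ih =>
    have hsplits := splits_iterate_derivative hp m
    have hk : k < (derivative^[m] p).natDegree := by rw [natDegree_iterate_derivative_eq_sub]; omega
    rw [Function.iterate_succ_apply',
      esymmMean_roots_derivative hsplits (splits_derivative hsplits) hk, ih (by omega)]

theorem exists_card_eq_and_esymmMean_eq (s : Multiset ℝ) {ℓ : ℕ} (hℓ : ℓ ≤ s.card) :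
    ∃ t : Multiset ℝ, t.card = ℓ ∧ ∀ k ≤ ℓ, esymmMean t k = esymmMean s k := by
  set p : ℝ[X] := (s.map fun a ↦ X - C a).prod
  have hroots : p.roots = s := roots_multiset_prod_X_sub_C s
  have hdeg : p.natDegree = s.card := natDegree_multiset_prod_X_sub_C_eq_card s
  have hp : p.Splits := splits_iff_card_roots.mpr (by rw [hroots, hdeg])
  refine ⟨(derivative^[s.card - ℓ] p).roots, ?_, fun k hk ↦ ?_⟩
  · rw [← (splits_iterate_derivative hp _).natDegree_eq_card_roots,
      natDegree_iterate_derivative_eq_sub, hdeg, Nat.sub_sub_self hℓ]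
  · rw [esymmMean_roots_iterate_derivative hp (by omega), hroots]

end Rolle

theorem truncation_symmetry :
    ∀ (n : ℕ), 1 ≤ n → ∀ (y : Fin n → ℝ) (ℓ : ℕ), 1 ≤ ℓ → ℓ ≤ n →
      ∃ x : Fin ℓ → ℝ, ∀ k : ℕ, k ≤ ℓ → smean ℓ k x = smean n k y := by
  intro n _ y ℓ _ hℓ
  obtain ⟨t, rfl, ht⟩ := exists_card_eq_and_esymmMean_eq (univ.val.map y) (ℓ := ℓ) (by simpa)
  obtain ⟨x, hx⟩ := exists_univ_val_map_eq t
  refine ⟨x, fun k hk ↦ ?_⟩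
  rw [smean_eq_esymmMean, smean_eq_esymmMean, hx, ht k hk]
end

section
/- For every n ≥ 3 and all real numbers y_1, …, y_n, one has |s_n(y)|^(1/n) ≤ max_{k ∈ {1,2}} (2n)^(k/(2(n−k))) · |s_{n−k}(y)|^(1/(n−k)). -/
open Finset Real

/-!
Put `P = y_1 ⋯ y_n`, `p = |P| ^ (1 / n)` and `z_i = ∏_{j ≠ i} y_j`. Since `z_i z_j` is `P` times the
product of the remaining `n - 2` variables, squaring `S_{n-1} = ∑ z_i` gives
`S_{n-1} ^ 2 = ∑ z_i ^ 2 + 2 P S_{n-2}`. The product of the `z_i` is `P ^ (n - 1)`, so by AM-GM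
`∑ z_i ^ 2 ≥ n p ^ (2 (n - 1))`. Hence one of `S_{n-1} ^ 2` and `2 |P S_{n-2}|` is at least
`n p ^ (2 (n - 1)) / 2`, and taking roots gives the two terms of the maximum.
-/

section ElementarySymmetric

theorem multiset_sum_sq {R : Type*} [CommSemiring R] (t : Multiset R) :
    t.sum ^ 2 = (t.map (· ^ 2)).sum + 2 * t.esymm 2 := by
  induction t using Multiset.induction_on with
  | empty => simp [Multiset.esymm, Multiset.powersetCard_zero_right]
  | cons a t ih =>
    have sum_mul_left : (t.map (a * ·)).sum = a * t.sum := by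
      simpa using Multiset.sum_map_mul_left (s := t) (a := a) (f := id)
    have esymm_cons : (a ::ₘ t).esymm 2 = t.esymm 2 + a * t.sum := by
      simp [Multiset.esymm, Multiset.powersetCard_one, sum_mul_left]
    rw [esymm_cons, Multiset.sum_cons, Multiset.map_cons, Multiset.sum_cons, add_sq, ih]
    ring

variable {ι M R : Type*} [DecidableEq ι]

theorem sum_powersetCard_sdiff [AddCommMonoid M] {s : Finset ι} {k : ℕ} (hk : k ≤ #s)
    (f : Finset ι → M) :
    ∑ A ∈ powersetCard k s, f (s \ A) = ∑ B ∈ powersetCard (#s - k) s, f B := by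
  refine sum_nbij' (s \ ·) (s \ ·) ?_ ?_ ?_ ?_ fun _ _ ↦ rfl <;>
    simp only [mem_powersetCard, and_imp] <;> intro A hA hcard
  · exact ⟨sdiff_subset, by rw [card_sdiff_of_subset hA, hcard]⟩
  · exact ⟨sdiff_subset, by rw [card_sdiff_of_subset hA, hcard, Nat.sub_sub_self hk]⟩
  all_goals exact Finset.sdiff_sdiff_eq_self hA

theorem prod_prod_erase [CommMonoid M] {s A : Finset ι} {k : ℕ} (hA : A ⊆ s) (hcard : #A = k + 1)
    (y : ι → M) :
    ∏ i ∈ A, ∏ j ∈ s.erase i, y j = (∏ j ∈ s, y j) ^ k * ∏ j ∈ s \ A, y j := by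
  calc ∏ i ∈ A, ∏ j ∈ s.erase i, y j
      = ∏ j ∈ s, ∏ _i ∈ A.erase j, y j := prod_comm' fun i j ↦ by
        have := @hA i
        simp only [mem_erase]
        tauto
    _ = ∏ j ∈ s, y j ^ k * if j ∈ A then 1 else y j := prod_congr rfl fun j _ ↦ by
        rw [prod_const, card_erase_eq_ite, hcard]
        split_ifs <;> simp [pow_succ]
    _ = (∏ j ∈ s, y j) ^ k * ∏ j ∈ s \ A, y j := by
        rw [prod_mul_distrib, prod_pow, prod_ite, prod_const_one, one_mul, ← sdiff_eq_filter]

theorem sum_powersetCard_prod_prod_erase [CommSemiring R] {s : Finset ι} {k : ℕ} (hk : k + 1 ≤ #s)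
    (y : ι → R) :
    ∑ A ∈ powersetCard (k + 1) s, ∏ i ∈ A, ∏ j ∈ s.erase i, y j =
      (∏ j ∈ s, y j) ^ k * ∑ B ∈ powersetCard (#s - (k + 1)) s, ∏ j ∈ B, y j := by
  rw [← sum_powersetCard_sdiff hk, mul_sum]
  refine sum_congr rfl fun A hA ↦ ?_
  obtain ⟨hAs, hcard⟩ := mem_powersetCard.1 hA
  exact prod_prod_erase hAs hcard y

theorem sq_sum_powersetCard_pred_prod [CommSemiring R] {s : Finset ι} (hs : 2 ≤ #s) (y : ι → R) :
    (∑ B ∈ powersetCard (#s - 1) s, ∏ j ∈ B, y j) ^ 2 =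
      ∑ i ∈ s, (∏ j ∈ s.erase i, y j) ^ 2 +
        2 * ((∏ j ∈ s, y j) * ∑ B ∈ powersetCard (#s - 2) s, ∏ j ∈ B, y j) := by
  have sum_erase : ∑ i ∈ s, ∏ j ∈ s.erase i, y j =
      ∑ B ∈ powersetCard (#s - 1) s, ∏ j ∈ B, y j := by
    simpa [powersetCard_one] using sum_powersetCard_prod_prod_erase (k := 0) (by lia) y
  have esymm_erase := sum_powersetCard_prod_prod_erase (k := 1) hs y
  rw [← sum_erase, ← pow_one (∏ j ∈ s, y j), ← esymm_erase, ← esymm_map_val]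
  simpa using multiset_sum_sq (s.val.map fun i ↦ ∏ j ∈ s.erase i, y j)

end ElementarySymmetric

theorem card_mul_le_sum_of_pow_card_le_prod {ι : Type*} {s : Finset ι} {z : ι → ℝ} {q : ℝ}
    (hz : ∀ i ∈ s, 0 ≤ z i) (hq : 0 ≤ q) (h : q ^ #s ≤ ∏ i ∈ s, z i) :
    #s * q ≤ ∑ i ∈ s, z i := by
  obtain rfl | hs := s.eq_empty_or_nonempty
  · simp
  have hcard : (0 : ℝ) < #s := by exact_mod_cast hs.card_pos
  have amgm : (∏ i ∈ s, z i) ^ (#s : ℝ)⁻¹ ≤ (∑ i ∈ s, z i) / #s := by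
    simpa using geom_mean_le_arith_mean s (fun _ ↦ 1) z (by simp) (by simpa using hs) hz
  have hroot : q ≤ (∏ i ∈ s, z i) ^ (#s : ℝ)⁻¹ := by
    rwa [le_rpow_inv_iff_of_pos hq (prod_nonneg hz) hcard, rpow_natCast]
  exact (le_div_iff₀' hcard).1 (hroot.trans amgm)

theorem card_mul_pow_le_sum_sq_prod_erase {ι : Type*} [DecidableEq ι] {s : Finset ι} {y : ι → ℝ}
    {p : ℝ} (h : p ^ #s = |∏ i ∈ s, y i|) :
    #s * (p ^ (#s - 1)) ^ 2 ≤ ∑ i ∈ s, (∏ j ∈ s.erase i, y j) ^ 2 := by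
  obtain rfl | hs := s.eq_empty_or_nonempty
  · simp
  refine card_mul_le_sum_of_pow_card_le_prod (fun _ _ ↦ sq_nonneg _) (by positivity) (le_of_eq ?_)
  have hprod : ∏ i ∈ s, ∏ j ∈ s.erase i, y j = (∏ j ∈ s, y j) ^ (#s - 1) := by
    simpa using prod_prod_erase subset_rfl (Nat.sub_add_cancel hs.card_pos).symm y
  rw [prod_pow, hprod, ← sq_abs ((∏ j ∈ s, y j) ^ _), abs_pow, ← h]
  ring

theorem le_rpow_div_mul_rpow_of_pow_le {p c a s : ℝ} {m : ℕ} (hp : 0 ≤ p) (hc : 0 ≤ c)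
    (hs : 0 ≤ s) (hm : m ≠ 0) (h : p ^ m ≤ c ^ a * s) :
    p ≤ c ^ (a / m) * s ^ (1 / m : ℝ) := by
  rw [div_eq_mul_inv, rpow_mul hc, one_div, ← mul_rpow (by positivity) hs,
    le_rpow_inv_iff_of_pos hp (by positivity) (by positivity), rpow_natCast]
  exact h

section Means

variable {n : ℕ} {y : Fin n → ℝ} {p : ℝ}

theorem smean_self (y : Fin n → ℝ) : smean n n y = ∏ i, y i := by
  have powersetCard_card : powersetCard n (univ : Finset (Fin n)) = {univ} := by
    simpa using powersetCard_self (univ : Finset (Fin n))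
  simp [smean, esymmS, powersetCard_card]

theorem choose_mul_smean {k : ℕ} (hk : k ≤ n) (y : Fin n → ℝ) :
    n.choose k * smean n (n - k) y = esymmS n (n - k) y := by
  rw [smean, Nat.choose_symm hk]
  exact mul_div_cancel₀ _ (by exact_mod_cast (Nat.choose_pos hk).ne')

theorem sq_esymmS_pred (hn : 2 ≤ n) (y : Fin n → ℝ) :
    esymmS n (n - 1) y ^ 2 =
      ∑ i, (∏ j ∈ univ.erase i, y j) ^ 2 + 2 * ((∏ j, y j) * esymmS n (n - 2) y) := by
  simpa [esymmS] using sq_sum_powersetCard_pred_prod (s := univ) (by simpa using hn) y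

theorem sq_pow_pred_le_smean (hn : 2 ≤ n) (h : p ^ n = |∏ i, y i|) :
    (p ^ (n - 1)) ^ 2 ≤
      n * |smean n (n - 1) y| ^ 2 + (n - 1) * (p ^ n * |smean n (n - 2) y|) := by
  have hn0 : (0 : ℝ) < n := by positivity
  have hn1 : (1 : ℝ) ≤ n := by exact_mod_cast one_le_two.trans hn
  have hamgm : n * (p ^ (n - 1)) ^ 2 ≤ ∑ i, (∏ j ∈ univ.erase i, y j) ^ 2 := by
    simpa using card_mul_pow_le_sum_sq_prod_erase (s := univ) (y := y) (by simpa using h)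
  have hsq := sq_esymmS_pred hn y
  rw [← choose_mul_smean (by lia), ← choose_mul_smean hn, Nat.choose_one_right,
    Nat.cast_choose_two] at hsq
  have habs : -((∏ i, y i) * smean n (n - 2) y) ≤ p ^ n * |smean n (n - 2) y| := by
    rw [h, ← abs_mul]
    exact neg_le_abs _
  refine le_of_mul_le_mul_left ?_ hn0
  calc n * (p ^ (n - 1)) ^ 2
      ≤ n * (n * smean n (n - 1) y ^ 2 + (n - 1) * -((∏ i, y i) * smean n (n - 2) y)) := by
        linear_combination hamgm - hsq
    _ ≤ n * (n * |smean n (n - 1) y| ^ 2 + (n - 1) * (p ^ n * |smean n (n - 2) y|)) := by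
        rw [sq_abs]
        gcongr

theorem pow_pred_le_smean_or_pow_sub_two_le_smean (hn : 2 ≤ n) (hp : 0 ≤ p)
    (h : p ^ n = |∏ i, y i|) :
    p ^ (n - 1) ≤ √(2 * n) * |smean n (n - 1) y| ∨
      p ^ (n - 2) ≤ 2 * n * |smean n (n - 2) y| := by
  obtain rfl | hp := hp.eq_or_lt
  · left
    rw [zero_pow (by lia)]
    positivity
  refine or_iff_not_imp_left.2 fun hfirst_fails ↦ ?_
  have hmean_lt : 2 * n * |smean n (n - 1) y| ^ 2 < (p ^ (n - 1)) ^ 2 := by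
    rw [← sq_sqrt (show (0 : ℝ) ≤ 2 * n by positivity), ← mul_pow]
    exact pow_lt_pow_left₀ (not_le.1 hfirst_fails) (by positivity) two_ne_zero
  have hsplit : (p ^ (n - 1)) ^ 2 = p ^ n * p ^ (n - 2) := by
    rw [← pow_mul, ← pow_add]
    congr 1
    lia
  refine le_of_mul_le_mul_left ?_ (pow_pos hp n)
  have hnonneg : 0 ≤ p ^ n * |smean n (n - 2) y| := by positivity
  linarith [sq_pow_pred_le_smean hn h]

end Means

theorem sn_step_bound (n : ℕ) (hn : 3 ≤ n) (y : Fin n → ℝ) :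
    |smean n n y| ^ ((1 : ℝ) / n) ≤
      max ((2 * (n : ℝ)) ^ ((1 : ℝ) / (2 * ((n : ℝ) - 1))) * |smean n (n - 1) y| ^ ((1 : ℝ) / ((n : ℝ) - 1)))
        ((2 * (n : ℝ)) ^ ((2 : ℝ) / (2 * ((n : ℝ) - 2))) * |smean n (n - 2) y| ^ ((1 : ℝ) / ((n : ℝ) - 2))) := by
  rw [smean_self]
  set p := |∏ i, y i| ^ ((1 : ℝ) / n) with hp_def
  have hp : 0 ≤ p := by positivity
  have hpn : p ^ n = |∏ i, y i| := by
    rw [hp_def, one_div, rpow_inv_natCast_pow (abs_nonneg _) (by lia)]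
  have cast_sub_one : ((n - 1 : ℕ) : ℝ) = n - 1 := Nat.cast_pred (by lia)
  have cast_sub_two : ((n - 2 : ℕ) : ℝ) = n - 2 := Nat.cast_sub (by lia)
  rw [← cast_sub_one, ← cast_sub_two, ← div_div, ← div_div, div_self two_ne_zero,
    le_max_iff]
  refine (pow_pred_le_smean_or_pow_sub_two_le_smean (by lia) hp hpn).imp (fun h ↦ ?_) fun h ↦ ?_
  · rw [sqrt_eq_rpow] at h
    exact le_rpow_div_mul_rpow_of_pow_le hp (by positivity) (abs_nonneg _) (by lia) h
  · rw [← rpow_one (2 * (n : ℝ))] at h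
    exact le_rpow_div_mul_rpow_of_pow_le hp (by positivity) (abs_nonneg _) (by lia) h
end
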